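/- Let (R, 𝔪, k) be a commutative noetherian local ring, M a nonzero finitely generated R-module, and x ∈ 𝔪 an M-regular element. Then AB-dim_R (M/xM) = AB-dim_R M + 1. -/

import Mathlib

/-!
Write `P(M, N)` for `extP` and `P(M)` for `extPsup`.

**The invariant `P`.** The long exact sequence of `Ext(-, N)` along `0 → M → M → M/xM → 0`, with
first map multiplication by `x`, gives `P(M/xM, N) ≤ P(M, N) + 1`. Conversely, if
`Ext^{n+1}(M/xM, N) = 0`, then `x` acts surjectively on the finitely generated module
`Ext^n(M, N)`, which vanishes by Nakayama. Hence `P(M/xM, N) = P(M, N) + 1` (`extP_quotient`); the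
same argument shows `(M/xM)^⊥ = M^⊥`, and so `P(M/xM) = P(M) + 1` (`extPsup_quotient`).

**Reduction to finiteness of the G-dimension.** If `M ≠ 0` has finite G-dimension, then
`R ∈ M^⊥` and `G-dim M ≤ P(M, R) ≤ P(M)` (`gdim_le_extPsup`), so `AB-dim M = P(M)`. If the
G-dimension is infinite, then `AB-dim M = ∞`. It therefore suffices to show that `M` and `M/xM`
have finite G-dimension simultaneously (`exists_gdLE_quotient_iff`).

**Finiteness of the G-dimension.** For a free cover `π : F → M` let `E` be the kernel of
`F × M → M`, `(f, m) ↦ π f + x m`. Regularity of `x` identifies `E` with a first syzygy of `M/xM`.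
The construction of `E` makes sense without regularity and commutes with syzygies: replacing `M` by
`ker π` replaces `E` by a first syzygy of `E` (`coneCoverKer`). Since bounds on the G-dimension can
be read off any free cover (`GdLE.syzygy`), induction reduces everything to an exact sequence
`0 → E → F × K → K → 0` of the above form with `Ext^n(K, R) = 0` for `n > 0`, and to the claim that
`K` is totally reflexive if and only if `E` is. One direction is the closure of totally reflexive
modules under kernels of epimorphisms. The other (`IsTotallyReflexive.descend`) dualizes the
sequence once and twice and applies Nakayama to `Ext^n(K*, R)` and to the kernel and the cokernel of
the biduality map of `K`.
-/

open CategoryTheory IsLocalRing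

noncomputable section

universe u

variable (R : Type u) [CommRing R]

/-- The Ext group `Ext^n_R(M, N)` vanishes. -/
def ExtVanishes (M : Type u) [AddCommGroup M] [Module R M]
    (N : Type u) [AddCommGroup N] [Module R N] (n : ℕ) : Prop :=
  Subsingleton (((Ext R (ModuleCat.{u} R) n).obj
    (Opposite.op (ModuleCat.of R M))).obj (ModuleCat.of R N))

/-- `N ∈ M^⊥`, i.e. `Ext^n_R(M,N) = 0` for all sufficiently large `n`. -/
def MemPerp (M : Type u) [AddCommGroup M] [Module R M]
    (N : Type u) [AddCommGroup N] [Module R N] : Prop :=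
  ∃ d : ℕ, ∀ n ≥ d, ExtVanishes R M N n

/-- `P_R(M,N) = sup { n | Ext^n_R(M,N) ≠ 0 }`, an element of `{-∞} ∪ ℕ ∪ {∞}`;
it is `⊥ = -∞` when every `Ext^n_R(M,N)` vanishes. -/
def extP (M : Type u) [AddCommGroup M] [Module R M]
    (N : Type u) [AddCommGroup N] [Module R N] : WithBot ℕ∞ :=
  sSup {x : WithBot ℕ∞ | ∃ n : ℕ, ¬ ExtVanishes R M N n ∧ x = (n : ℕ∞)}

/-- `P_R(M) = sup { P_R(M,N) | N ∈ M^⊥ }`, the sup being taken over all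
finitely generated modules in `M^⊥`. -/
def extPsup (M : Type u) [AddCommGroup M] [Module R M] : WithBot ℕ∞ :=
  sSup {x : WithBot ℕ∞ | ∃ (N : Type u) (_ : AddCommGroup N) (_ : Module R N),
    Module.Finite R N ∧ MemPerp R M N ∧ x = extP R M N}

/-- A module `G` is totally reflexive if the biduality map `G → G**` is bijective and
`Ext^n_R(G,R) = 0 = Ext^n_R(G*,R)` for all `n > 0`. -/
def IsTotallyReflexive (G : Type u) [AddCommGroup G] [Module R G] : Prop :=
  Function.Bijective (Module.Dual.eval R G) ∧
    (∀ n > 0, ExtVanishes R G R n) ∧ (∀ n > 0, ExtVanishes R (Module.Dual R G) R n)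

/-- `G-dim_R M ≤ n`: there is a resolution of `M` of length `n` by finitely generated
totally reflexive modules. -/
def GdimLE : ℕ → ModuleCat.{u} R → Prop
  | 0, M => IsTotallyReflexive R M
  | n + 1, M => ∃ G : ModuleCat.{u} R, Module.Finite R G ∧ IsTotallyReflexive R G ∧
      ∃ f : G →ₗ[R] M, Function.Surjective f ∧ GdimLE n (ModuleCat.of R (LinearMap.ker f))

/-- The G-dimension of `M`, as an element of `ℕ∞`. -/
def gdim (M : Type u) [AddCommGroup M] [Module R M] : ℕ∞ :=
  sInf {x : ℕ∞ | ∃ n : ℕ, GdimLE R n (ModuleCat.of R M) ∧ x = n}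

/-- `pd_R M ≤ n`: there is a projective resolution of `M` of length `n` by finitely
generated projective modules. -/
def ProjDimLE : ℕ → ModuleCat.{u} R → Prop
  | 0, M => Module.Projective R M
  | n + 1, M => ∃ P : ModuleCat.{u} R, Module.Finite R P ∧ Module.Projective R P ∧
      ∃ f : P →ₗ[R] M, Function.Surjective f ∧ ProjDimLE n (ModuleCat.of R (LinearMap.ker f))

/-- The projective dimension of `M`, as an element of `ℕ∞`. -/
def projdim (M : Type u) [AddCommGroup M] [Module R M] : ℕ∞ :=
  sInf {x : ℕ∞ | ∃ n : ℕ, ProjDimLE R n (ModuleCat.of R M) ∧ x = n}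

/-- `injdim_R M ≤ n`: there is an injective resolution of `M` of length `n`. -/
def InjDimLE : ℕ → ModuleCat.{u} R → Prop
  | 0, M => Module.Injective R M
  | n + 1, M => ∃ I : ModuleCat.{u} R, Module.Injective R I ∧
      ∃ f : M →ₗ[R] I, Function.Injective f ∧
        InjDimLE n (ModuleCat.of R (I ⧸ LinearMap.range f))

/-- `R` is Gorenstein: `R` has finite injective dimension as a module over itself. -/
def IsGorensteinRing : Prop := ∃ n : ℕ, InjDimLE R n (ModuleCat.of R R)

/-- `AB-dim_R M = sup { G-dim_R M, P_R(M) }`. -/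
def abdim (M : Type u) [AddCommGroup M] [Module R M] : WithBot ℕ∞ :=
  max ((gdim R M : ℕ∞) : WithBot ℕ∞) (extPsup R M)

/-- The depth of `M`: the length of a maximal `M`-regular sequence contained in the
maximal ideal (expressed as the sup of lengths of such regular sequences). -/
def rdepth [IsLocalRing R] (M : Type u) [AddCommGroup M] [Module R M] : ℕ∞ :=
  sSup {x : ℕ∞ | ∃ rs : List R, (∀ r ∈ rs, r ∈ maximalIdeal R) ∧
    RingTheory.Sequence.IsRegular M rs ∧ x = rs.length}

/-- `S` is a first syzygy `Ω M` of `M`: the kernel of a minimal free cover of `M`. -/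
def IsSyzygyOf [IsLocalRing R] (S M : ModuleCat.{u} R) : Prop :=
  ∃ F : ModuleCat.{u} R, Module.Free R F ∧ Module.Finite R F ∧
    ∃ π : F →ₗ[R] M, Function.Surjective π ∧
      LinearMap.ker π ≤ (maximalIdeal R) • (⊤ : Submodule R F) ∧
      Nonempty (S ≃ₗ[R] LinearMap.ker π)

/-- `S` is an `n`-th syzygy `Ω^n M` of `M`. -/
def IsNthSyzygyOf [IsLocalRing R] : ℕ → ModuleCat.{u} R → ModuleCat.{u} R → Prop
  | 0, S, M => Nonempty (S ≃ₗ[R] M)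
  | n + 1, S, M => ∃ T : ModuleCat.{u} R, IsSyzygyOf R T M ∧ IsNthSyzygyOf n S T

end

section
variable {R : Type u} [CommRing R]

/-! ### Ext groups and short exact sequences -/

/-- The derived-functor `Ext` of the definitions and Mathlib's `Abelian.Ext` vanish together: both
are computed by the same projective resolution of `M`. -/
theorem extVanishes_iff (M : Type u) [AddCommGroup M] [Module R M]
    (N : Type u) [AddCommGroup N] [Module R N] (n : ℕ) :
    ExtVanishes R M N n ↔ Subsingleton (Abelian.Ext (ModuleCat.of R M) (ModuleCat.of R N) n) := by
  let P := ProjectiveResolution.of (ModuleCat.of R M)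
  have e := (P.isoExt (R := R) n (ModuleCat.of R N))
  unfold ExtVanishes
  rw [e.toLinearEquiv.toEquiv.subsingleton_congr, ← ModuleCat.isZero_iff_subsingleton,
    ← HomologicalComplex.exactAt_iff_isZero_homology]
  cases n with
  | zero =>
    rw [HomologicalComplex.exactAt_iff' _ 0 0 1 (by simp) (by simp),
      ShortComplex.moduleCat_exact_iff, Abelian.Ext.homEquiv₀.subsingleton_congr]
    have hzero : ((P.complex.linearYonedaObj R (ModuleCat.of R N)).sc' 0 0 1).f = 0 :=
      (P.complex.linearYonedaObj R (ModuleCat.of R N)).shape 0 0 (by simp)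
    constructor
    · intro h
      refine subsingleton_of_forall_eq 0 fun g => ?_
      obtain ⟨a, ha⟩ := h (P.π.f 0 ≫ g) ((P.complex_d_comp_π_f_zero_assoc g).trans Limits.zero_comp)
      rw [hzero] at ha
      have h0 : P.π.f 0 ≫ g = P.π.f 0 ≫ 0 := by rw [Limits.comp_zero]; exact ha.symm
      exact (cancel_epi (P.π.f 0)).1 h0
    · intro h f hf
      obtain ⟨l, hl⟩ := Limits.CokernelCofork.IsColimit.desc' P.isColimitCokernelCofork f hf
      have hl0 : l = 0 := h.elim _ _
      refine ⟨0, ?_⟩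
      rw [map_zero, ← hl, hl0, Limits.comp_zero]
      rfl
  | succ n =>
    rw [HomologicalComplex.exactAt_iff' _ n (n+1) (n+2) (by simp) (by simp),
      ShortComplex.moduleCat_exact_iff]
    constructor
    · intro h
      refine subsingleton_of_forall_eq 0 fun α => ?_
      obtain ⟨f, hf, rfl⟩ := P.extMk_surjective α (n+2) rfl
      rw [P.extMk_eq_zero_iff _ _ _ _ n rfl]
      obtain ⟨g, hg⟩ := h f hf
      exact ⟨g, hg⟩
    · intro h f hf
      have := (P.extMk_eq_zero_iff f _ rfl hf n rfl).1 (Subsingleton.elim _ _)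
      obtain ⟨g, hg⟩ := this
      exact ⟨g, hg⟩

/-- The sequence `0 → A → B → C → 0` with maps `f` and `g` is exact. -/
structure IsSES {A B C : Type u} [AddCommGroup A] [Module R A] [AddCommGroup B] [Module R B]
    [AddCommGroup C] [Module R C] (f : A →ₗ[R] B) (g : B →ₗ[R] C) : Prop where
  inj : Function.Injective f
  exact : Function.Exact f g
  surj : Function.Surjective g

section exact

variable {A B C : Type u} [AddCommGroup A] [Module R A] [AddCommGroup B] [Module R B]
    [AddCommGroup C] [Module R C] {f : A →ₗ[R] B} {g : B →ₗ[R] C}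

theorem IsSES.ker {g : B →ₗ[R] C} (hg : Function.Surjective g) :
    IsSES (LinearMap.ker g).subtype g :=
  ⟨Subtype.val_injective, LinearMap.exact_subtype_ker_map g, hg⟩

/-- The short complex in `ModuleCat R` attached to a short exact sequence. -/
abbrev IsSES.complex (h : IsSES f g) : ShortComplex (ModuleCat.{u} R) :=
  ShortComplex.mk (ModuleCat.ofHom f) (ModuleCat.ofHom g)
    (by ext a; exact (h.exact (f a)).2 ⟨a, rfl⟩)

theorem IsSES.shortExact (h : IsSES f g) : h.complex.ShortExact where
  exact := (ShortComplex.ShortExact.moduleCat_exact_iff_function_exact _).2 h.exact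
  mono_f := (ModuleCat.mono_iff_injective _).2 h.inj
  epi_g := (ModuleCat.epi_iff_surjective _).2 h.surj

variable {N : Type u} [AddCommGroup N] [Module R N]

theorem ExtVanishes.mid (h : IsSES f g) {n : ℕ} (hA : ExtVanishes R A N n)
    (hC : ExtVanishes R C N n) : ExtVanishes R B N n := by
  rw [extVanishes_iff] at *
  refine subsingleton_of_forall_eq 0 fun y => ?_
  obtain ⟨z, rfl⟩ := Abelian.Ext.contravariant_sequence_exact₂ h.shortExact (ModuleCat.of R N) y
    (hA.elim _ _)
  rw [hC.elim z 0, Abelian.Ext.comp_zero]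

theorem ExtVanishes.left (h : IsSES f g) {n : ℕ} (hB : ExtVanishes R B N n)
    (hC : ExtVanishes R C N (n + 1)) : ExtVanishes R A N n := by
  rw [extVanishes_iff] at *
  refine subsingleton_of_forall_eq 0 fun y => ?_
  obtain ⟨z, rfl⟩ := Abelian.Ext.contravariant_sequence_exact₁ h.shortExact (ModuleCat.of R N) y
    (add_comm 1 n) (hC.elim _ _)
  rw [hB.elim z 0, Abelian.Ext.comp_zero]

theorem ExtVanishes.right (h : IsSES f g) {n : ℕ} (hA : ExtVanishes R A N n)
    (hB : ExtVanishes R B N (n + 1)) : ExtVanishes R C N (n + 1) := by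
  rw [extVanishes_iff] at *
  refine subsingleton_of_forall_eq 0 fun y => ?_
  obtain ⟨z, rfl⟩ := Abelian.Ext.contravariant_sequence_exact₃ h.shortExact (ModuleCat.of R N) y
    (hB.elim _ _) (add_comm 1 n)
  rw [hA.elim z 0, Abelian.Ext.comp_zero]

theorem extVanishes_zero_iff : ExtVanishes R A N 0 ↔ ∀ φ : A →ₗ[R] N, φ = 0 := by
  rw [extVanishes_iff, Abelian.Ext.homEquiv₀.subsingleton_congr]
  constructor
  · intro h φ
    exact congrArg ModuleCat.Hom.hom (h.elim (ModuleCat.ofHom φ) 0)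
  · intro h
    refine subsingleton_of_forall_eq 0 fun φ => ?_
    ext1
    exact h φ.hom

theorem ExtVanishes.of_projective [Module.Projective R A] (n : ℕ) :
    ExtVanishes R A N (n + 1) := by
  rw [extVanishes_iff]
  have : Projective (ModuleCat.of R A) := (IsProjective.iff_projective A).1 inferInstance
  exact Abelian.Ext.subsingleton_of_projective _ _ n

/-- If `Ext¹(C, N) = 0`, every homomorphism `A → N` extends to `B`. -/
theorem IsSES.extend (h : IsSES f g) (hC : ExtVanishes R C N 1) (φ : A →ₗ[R] N) :
    ∃ ψ : B →ₗ[R] N, ψ ∘ₗ f = φ := by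
  rw [extVanishes_iff] at hC
  obtain ⟨z, hz⟩ := Abelian.Ext.contravariant_sequence_exact₁ h.shortExact (ModuleCat.of R N)
    (Abelian.Ext.mk₀ (ModuleCat.ofHom φ)) (add_comm 1 0) (hC.elim _ _)
  obtain ⟨ψ, rfl⟩ := (Abelian.Ext.mk₀_bijective _ _).2 z
  rw [Abelian.Ext.mk₀_comp_mk₀] at hz
  exact ⟨ψ.hom, congrArg ModuleCat.Hom.hom ((Abelian.Ext.mk₀_bijective _ _).1 hz)⟩

/-- If `Ext¹(B, N) = 0` and every homomorphism `A → N` extends to `B`, then `Ext¹(C, N) = 0`. -/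
theorem ExtVanishes.one_of_extend (h : IsSES f g) (hB : ExtVanishes R B N 1)
    (hext : ∀ φ : A →ₗ[R] N, ∃ ψ : B →ₗ[R] N, ψ ∘ₗ f = φ) : ExtVanishes R C N 1 := by
  rw [extVanishes_iff] at *
  refine subsingleton_of_forall_eq 0 fun y => ?_
  obtain ⟨z, rfl⟩ := Abelian.Ext.contravariant_sequence_exact₃ h.shortExact (ModuleCat.of R N) y
    (hB.elim _ _) (add_comm 1 0)
  obtain ⟨φ, rfl⟩ := (Abelian.Ext.mk₀_bijective _ _).2 z
  obtain ⟨ψ, hψ⟩ := hext φ.hom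
  have : φ = h.complex.f ≫ ModuleCat.ofHom ψ := by
    ext1
    exact hψ.symm
  rw [this, ← Abelian.Ext.mk₀_comp_mk₀, h.shortExact.extClass_comp_assoc]

end exact

/-- Nakayama's lemma for `Ext` along `0 → A → B → C → 0`. Suppose that, up to a multiple of `x`, the
map `A → B` factors through some `F` with `Ext^n(F, N) = 0`. Then every class in `Ext^n(A, N)`
coming from `Ext^n(B, N)` is a multiple of `x`, so `Ext^{n+1}(C, N) = 0` forces
`Ext^n(A, N) = 0`. -/
theorem ExtVanishes.nakayama [IsLocalRing R] [IsNoetherianRing R]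
    {A B C F N : Type u} [AddCommGroup A] [Module R A] [AddCommGroup B] [Module R B]
    [AddCommGroup C] [Module R C] [AddCommGroup F] [Module R F] [AddCommGroup N] [Module R N]
    [Module.Finite R A] [Module.Finite R N]
    {f : A →ₗ[R] B} {g : B →ₗ[R] C} (h : IsSES f g) {x : R} (hx : x ∈ maximalIdeal R)
    (p : A →ₗ[R] F) (j : F →ₗ[R] B) (s : A →ₗ[R] B) (hf : f = j ∘ₗ p + x • s) {n : ℕ}
    (hF : ExtVanishes R F N n) (hC : ExtVanishes R C N (n + 1)) : ExtVanishes R A N n := by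
  rw [extVanishes_iff] at *
  have hfg := (Module.finite_def (R := R)
    (M := Abelian.Ext (ModuleCat.of R A) (ModuleCat.of R N) n)).1 inferInstance
  have key : (⊤ : Submodule R (Abelian.Ext (ModuleCat.of R A) (ModuleCat.of R N) n)) ≤
      maximalIdeal R • ⊤ := by
    intro y _
    obtain ⟨z, rfl⟩ := Abelian.Ext.contravariant_sequence_exact₁ h.shortExact
      (ModuleCat.of R N) y (add_comm 1 n) (hC.elim _ _)
    have e : h.complex.f =
        ModuleCat.ofHom p ≫ ModuleCat.ofHom j + x • ModuleCat.ofHom s := by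
      ext1
      exact hf
    rw [e, Abelian.Ext.mk₀_add, Abelian.Ext.add_comp, ← Abelian.Ext.mk₀_comp_mk₀,
      Abelian.Ext.comp_assoc _ _ _ (zero_add 0) (zero_add n) (by omega),
      hF.elim ((Abelian.Ext.mk₀ (ModuleCat.ofHom j)).comp z (zero_add n)) 0,
      Abelian.Ext.comp_zero, zero_add, Abelian.Ext.mk₀_smul, Abelian.Ext.smul_comp]
    exact Submodule.smul_mem_smul hx trivial
  have := Submodule.eq_bot_of_le_smul_of_le_jacobson_bot _ _ hfg key
    (IsLocalRing.maximalIdeal_le_jacobson _)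
  exact (Submodule.subsingleton_iff R).1 (subsingleton_of_bot_eq_top this.symm)

/-! ### Totally reflexive modules -/

section reflexive

variable {A B C : Type u} [AddCommGroup A] [Module R A] [AddCommGroup B] [Module R B]
    [AddCommGroup C] [Module R C] {f : A →ₗ[R] B} {g : B →ₗ[R] C}

/-- The dual of `0 → A → B → C → 0` is short exact as soon as `Ext¹(C, R) = 0`. -/
theorem IsSES.dual (h : IsSES f g) (hC : ExtVanishes R C R 1) : IsSES g.dualMap f.dualMap where
  inj := LinearMap.dualMap_injective_of_surjective h.surj
  exact := by
    intro φ
    constructor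
    · intro hφ
      have hker : LinearMap.ker g ≤ LinearMap.ker φ := by
        intro b hb
        obtain ⟨a, rfl⟩ := (h.exact b).1 hb
        exact LinearMap.congr_fun hφ a
      let e := g.quotKerEquivOfSurjective h.surj
      refine ⟨(LinearMap.ker g).liftQ φ hker ∘ₗ e.symm.toLinearMap, ?_⟩
      ext b
      have : e.symm (g b) = Submodule.Quotient.mk b := by
        rw [LinearEquiv.symm_apply_eq]
        rfl
      simp [LinearMap.dualMap_apply, this]
    · rintro ⟨ψ, rfl⟩
      ext a
      have : g (f a) = 0 := (h.exact _).2 ⟨a, rfl⟩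
      simp [LinearMap.dualMap_apply, this]
  surj := h.extend hC

/-- Naturality of the biduality map. -/
theorem bidual_apply (f : A →ₗ[R] B) (a : A) :
    f.dualMap.dualMap (Module.Dual.eval R A a) = Module.Dual.eval R B (f a) := rfl

section chase

variable {A' B' C' : Type u} [AddCommGroup A'] [Module R A'] [AddCommGroup B'] [Module R B']
    [AddCommGroup C'] [Module R C'] {f' : A' →ₗ[R] B'} {g' : B' →ₗ[R] C'}
    {α : A →ₗ[R] A'} {β : B →ₗ[R] B'} {γ : C →ₗ[R] C'}

theorem IsSES.bijective_mid (h : IsSES f g) (h' : IsSES f' g')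
    (hf : ∀ a, f' (α a) = β (f a)) (hg : ∀ b, g' (β b) = γ (g b))
    (hα : Function.Bijective α) (hγ : Function.Bijective γ) : Function.Bijective β := by
  constructor
  · rw [injective_iff_map_eq_zero]
    intro b hb
    have : g b = 0 := hγ.1 (by rw [← hg, hb, map_zero, map_zero])
    obtain ⟨a, rfl⟩ := (h.exact b).1 this
    have : α a = 0 := h'.inj (by rw [hf, hb, map_zero])
    rw [hα.1 (this.trans (map_zero α).symm), map_zero]
  · intro b'
    obtain ⟨c, hc⟩ := hγ.2 (g' b')
    obtain ⟨b, rfl⟩ := h.surj c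
    obtain ⟨a', ha'⟩ := (h'.exact (b' - β b)).1 (by rw [map_sub, hg, hc, sub_self])
    obtain ⟨a, rfl⟩ := hα.2 a'
    exact ⟨f a + b, by rw [map_add, ← hf, ha', sub_add_cancel]⟩

theorem IsSES.bijective_right (h : IsSES f g) (h' : IsSES f' g')
    (hf : ∀ a, f' (α a) = β (f a)) (hg : ∀ b, g' (β b) = γ (g b))
    (hα : Function.Bijective α) (hβ : Function.Bijective β) : Function.Bijective γ := by
  constructor
  · rw [injective_iff_map_eq_zero]
    intro c hc
    obtain ⟨b, rfl⟩ := h.surj c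
    obtain ⟨a', ha'⟩ := (h'.exact (β b)).1 (by rw [hg, hc])
    obtain ⟨a, rfl⟩ := hα.2 a'
    rw [hf] at ha'
    exact (h.exact b).2 ⟨a, hβ.1 ha'⟩
  · intro c'
    obtain ⟨b', rfl⟩ := h'.surj c'
    obtain ⟨b, rfl⟩ := hβ.2 b'
    exact ⟨g b, (hg b).symm⟩

theorem IsSES.bijective_left (h : IsSES f g) (h' : IsSES f' g')
    (hf : ∀ a, f' (α a) = β (f a)) (hg : ∀ b, g' (β b) = γ (g b))
    (hβ : Function.Bijective β) (hγ : Function.Bijective γ) : Function.Bijective α := by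
  constructor
  · intro a₁ a₂ ha
    exact h.inj (hβ.1 (by rw [← hf, ← hf, ha]))
  · intro a'
    obtain ⟨b, hb⟩ := hβ.2 (f' a')
    have : g b = 0 := hγ.1 (by rw [← hg, hb, map_zero]; exact (h'.exact _).2 ⟨a', rfl⟩)
    obtain ⟨a, rfl⟩ := (h.exact b).1 this
    exact ⟨a, h'.inj (by rw [hf, hb])⟩

end chase

theorem IsTotallyReflexive.of_free (F : Type u) [AddCommGroup F] [Module R F] [Module.Free R F]
    [Module.Finite R F] : IsTotallyReflexive R F := by
  refine ⟨Module.bijective_dual_eval R F, ?_, ?_⟩ <;>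
  · rintro (_ | n) hn
    · omega
    · exact ExtVanishes.of_projective n

/-- Totally reflexive modules are closed under extensions. -/
theorem IsTotallyReflexive.mid (h : IsSES f g) (hA : IsTotallyReflexive R A)
    (hC : IsTotallyReflexive R C) : IsTotallyReflexive R B := by
  have hd := h.dual (hC.2.1 1 one_pos)
  refine ⟨?_, fun n hn => (hA.2.1 n hn).mid h (hC.2.1 n hn),
    fun n hn => (hC.2.2 n hn).mid hd (hA.2.2 n hn)⟩
  exact h.bijective_mid (hd.dual (hA.2.2 1 one_pos)) (bidual_apply f) (bidual_apply g) hA.1 hC.1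

/-- Totally reflexive modules are closed under kernels of epimorphisms. Surjectivity of
`B** → C**` gives the vanishing of `Ext¹(A*, R)`, the one degree out of reach of dimension
shifting. -/
theorem IsTotallyReflexive.left (h : IsSES f g) (hB : IsTotallyReflexive R B)
    (hC : IsTotallyReflexive R C) : IsTotallyReflexive R A := by
  have hd := h.dual (hC.2.1 1 one_pos)
  have h1 : ExtVanishes R (Module.Dual R A) R 1 := by
    refine (hB.2.2 1 one_pos).one_of_extend hd fun ξ => ?_
    obtain ⟨c, rfl⟩ := hC.1.2 ξ
    obtain ⟨b, rfl⟩ := h.surj c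
    exact ⟨Module.Dual.eval R B b, rfl⟩
  refine ⟨h.bijective_left (hd.dual h1) (bidual_apply f) (bidual_apply g) hB.1 hC.1,
    fun n hn => (hB.2.1 n hn).left h (hC.2.1 (n + 1) (by omega)), ?_⟩
  rintro (_ | _ | n) hn
  · omega
  · exact h1
  · exact (hC.2.2 (n + 1) (by omega)).right hd (hB.2.2 (n + 2) (by omega))

/-- Totally reflexive modules are closed under those cokernels `C` of monomorphisms for which
`Ext^n(C, R) = 0` for all `n > 0`. -/
theorem IsTotallyReflexive.right (h : IsSES f g) (hA : IsTotallyReflexive R A)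
    (hB : IsTotallyReflexive R B) (hC : ∀ n > 0, ExtVanishes R C R n) :
    IsTotallyReflexive R C := by
  have hd := h.dual (hC 1 one_pos)
  exact ⟨h.bijective_right (hd.dual (hA.2.2 1 one_pos)) (bidual_apply f) (bidual_apply g) hA.1
    hB.1, hC, fun n hn => (hB.2.2 n hn).left hd (hA.2.2 (n + 1) (by omega))⟩

theorem IsTotallyReflexive.of_equiv (e : A ≃ₗ[R] B) (hA : IsTotallyReflexive R A) :
    IsTotallyReflexive R B := by
  have h : IsSES e.toLinearMap (0 : B →ₗ[R] PUnit.{u + 1}) :=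
    ⟨e.injective, fun b => ⟨fun _ => e.surjective b, fun _ => rfl⟩, fun c => ⟨0, rfl⟩⟩
  exact hA.mid h (.of_free _)

theorem IsSES.prod (A F : Type u) [AddCommGroup A] [Module R A] [AddCommGroup F] [Module R F] :
    IsSES (LinearMap.inl R A F) (LinearMap.snd R A F) :=
  ⟨LinearMap.inl_injective, Function.Exact.inl_snd, LinearMap.snd_surjective⟩

/-- The base case of the descent: if `0 → E → F × K → K → 0` is exact with second map
`(f, k) ↦ π f + x k` and `Ext^n(K, R) = 0` for all `n > 0`, then total reflexivity passes from `E`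
to `K`. Multiplication by `x` is onto on `Ext^n(K*, R)` and on the cokernel and the kernel of
`K → K**`, so these vanish by Nakayama. -/
theorem IsTotallyReflexive.descend [IsLocalRing R] [IsNoetherianRing R]
    {K F E : Type u} [AddCommGroup K] [Module R K] [AddCommGroup F] [Module R F]
    [AddCommGroup E] [Module R E] [Module.Finite R K] [Module.Finite R F] [Module.Free R F]
    {x : R} (hx : x ∈ maximalIdeal R) {i : E →ₗ[R] F × K} {π : F →ₗ[R] K}
    (h : IsSES i (π.coprod (x • LinearMap.id))) (hE : IsTotallyReflexive R E)
    (hK : ∀ n > 0, ExtVanishes R K R n) : IsTotallyReflexive R K := by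
  have hd := h.dual (hK 1 one_pos)
  have hdd := hd.dual (hE.2.2 1 one_pos)
  have hF := IsTotallyReflexive.of_free (R := R) F
  refine ⟨⟨?_, ?_⟩, hK, ?_⟩
  · rw [← LinearMap.ker_eq_bot]
    refine Submodule.eq_bot_of_le_smul_of_le_jacobson_bot (maximalIdeal R) _
      (IsNoetherian.noetherian _) ?_ (IsLocalRing.maximalIdeal_le_jacobson _)
    intro k hk
    obtain ⟨b, rfl⟩ := h.surj k
    obtain ⟨ξ, hξ⟩ := (hdd.exact (Module.Dual.eval R _ b)).1 hk
    obtain ⟨e, rfl⟩ := hE.1.2 ξ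
    rw [bidual_apply] at hξ
    have hz : Module.Dual.eval R (F × K) (b - i e) = 0 := by rw [map_sub, hξ, sub_self]
    have hg : π.coprod (x • LinearMap.id) (i e) = 0 := (h.exact _).2 ⟨e, rfl⟩
    have h1 : (b - i e).1 = 0 := by
      apply hF.1.1
      rw [map_zero]
      exact congrArg (LinearMap.fst R F K).dualMap.dualMap hz
    have h2 : (b - i e).2 ∈ LinearMap.ker (Module.Dual.eval R K) :=
      congrArg (LinearMap.snd R F K).dualMap.dualMap hz
    have : π.coprod (x • LinearMap.id) b = x • (b - i e).2 := by
      rw [← sub_zero (π.coprod (x • LinearMap.id) b), ← hg, ← map_sub, LinearMap.coprod_apply, h1]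
      simp
    rw [this]
    exact Submodule.smul_mem_smul hx h2
  · rw [← LinearMap.range_eq_top, eq_top_iff]
    refine Submodule.le_of_le_smul_of_le_jacobson_bot (I := maximalIdeal R)
      (IsNoetherian.noetherian _) (IsLocalRing.maximalIdeal_le_jacobson _) ?_
    intro ζ _
    obtain ⟨η, rfl⟩ := hdd.surj ζ
    obtain ⟨a, ha⟩ := hF.1.2 ((LinearMap.fst R F K).dualMap.dualMap η)
    refine Submodule.mem_sup.2 ⟨_, ⟨π a, rfl⟩,
      x • (LinearMap.snd R F K).dualMap.dualMap η, Submodule.smul_mem_smul hx trivial, ?_⟩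
    rw [← bidual_apply, ha]
    ext φ
    change η (φ ∘ₗ π ∘ₗ LinearMap.fst R F K) + x • η (φ ∘ₗ LinearMap.snd R F K)
      = η (φ ∘ₗ π.coprod (x • LinearMap.id))
    rw [← map_smul, ← map_add]
    congr 1
    ext <;> simp
  · rintro (_ | n) hn
    · omega
    refine ExtVanishes.nakayama hd hx π.dualMap (LinearMap.fst R F K).dualMap
      (LinearMap.snd R F K).dualMap ?_ (ExtVanishes.of_projective n) (hE.2.2 (n + 2) (by omega))
    ext φ <;> simp [LinearMap.dualMap_apply]

end reflexive

/-! ### Bounds on the G-dimension -/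

section gdim

/-- `GdimLE` for an unbundled module. -/
abbrev GdLE (R : Type u) [CommRing R] (n : ℕ) (M : Type u) [AddCommGroup M] [Module R M] : Prop :=
  GdimLE R n (ModuleCat.of R M)

theorem GdLE.succ {n : ℕ} {M G : Type u} [AddCommGroup M] [Module R M]
    [AddCommGroup G] [Module R G] [Module.Finite R G] (hG : IsTotallyReflexive R G)
    (f : G →ₗ[R] M) (hf : Function.Surjective f) (h : GdLE R n (LinearMap.ker f)) :
    GdLE R (n + 1) M :=
  ⟨ModuleCat.of R G, inferInstance, hG, f, hf, h⟩

theorem GdLE.of_equiv {n : ℕ} {M M' : Type u} [AddCommGroup M] [Module R M]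
    [AddCommGroup M'] [Module R M'] (e : M ≃ₗ[R] M') (h : GdLE R n M) : GdLE R n M' := by
  cases n with
  | zero => exact IsTotallyReflexive.of_equiv e h
  | succ n =>
    obtain ⟨G, hG, hG', f, hf, h⟩ := h
    refine ⟨G, hG, hG', e.toLinearMap ∘ₗ f, e.surjective.comp hf, ?_⟩
    rwa [LinearEquiv.ker_comp]

theorem GdLE.mono_succ {n : ℕ} {M : Type u} [AddCommGroup M] [Module R M]
    [IsNoetherianRing R] [Module.Finite R M] (h : GdLE R n M) : GdLE R (n + 1) M := by
  induction n generalizing M with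
  | zero =>
    refine GdLE.succ h LinearMap.id Function.surjective_id ?_
    have e : PUnit.{u + 1} ≃ₗ[R] LinearMap.ker (LinearMap.id : M →ₗ[R] M) :=
      (LinearEquiv.ofEq _ _ LinearMap.ker_id |>.trans
        (Submodule.botEquivPUnit : _ ≃ₗ[R] PUnit.{u + 1})).symm
    exact IsTotallyReflexive.of_equiv e (.of_free _)
  | succ n ih =>
    obtain ⟨G, hG, hG', f, hf, h⟩ := h
    exact GdLE.succ hG' f hf (ih h)

/-- A direct sum with a finite free module does not raise a bound on the G-dimension. -/
theorem GdLE.prod {n : ℕ} {M : Type u} [AddCommGroup M] [Module R M]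
    (F : Type u) [AddCommGroup F] [Module R F] [Module.Free R F] [Module.Finite R F]
    (h : GdLE R n M) : GdLE R n (M × F) := by
  cases n with
  | zero => exact IsTotallyReflexive.mid (IsSES.prod M F) h (.of_free F)
  | succ n =>
    obtain ⟨G, hG, hG', f, hf, h⟩ := h
    refine GdLE.succ (G := G × F) (hG'.mid (IsSES.prod G F) (.of_free F))
      (f.prodMap LinearMap.id) (hf.prodMap Function.surjective_id) (GdLE.of_equiv ?_ h)
    exact
      { toFun := fun y => ⟨(y.1, 0), by
          have := y.2
          simp_all⟩
        invFun := fun y => ⟨y.1.1, by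
          have := congrArg Prod.fst y.2
          exact this⟩
        map_add' := fun y z => by ext <;> simp
        map_smul' := fun r y => by ext <;> simp
        left_inv := fun y => rfl
        right_inv := fun y => by
          have : y.1.2 = 0 := congrArg Prod.snd y.2
          ext <;> simp [this] }

/-- The kernel of a surjection onto a totally reflexive module satisfies the same bound on the
G-dimension. -/
theorem GdLE.ker_of_reflexive [IsNoetherianRing R] {n : ℕ} {P G : Type u} [AddCommGroup P]
    [Module R P] [AddCommGroup G] [Module R G] (h : GdLE R n P) (hG : IsTotallyReflexive R G)
    (q : P →ₗ[R] G) (hq : Function.Surjective q) : GdLE R n (LinearMap.ker q) := by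
  cases n with
  | zero => exact IsTotallyReflexive.left (IsSES.ker hq) h hG
  | succ n =>
    obtain ⟨G', hG', hG'', f, hf, h⟩ := h
    have hH : IsTotallyReflexive R (LinearMap.ker (q ∘ₗ f)) :=
      hG''.left (IsSES.ker (hq.comp hf)) hG
    let f' : LinearMap.ker (q ∘ₗ f) →ₗ[R] LinearMap.ker q :=
      f.restrict (fun y hy => hy)
    refine GdLE.succ hH f' ?_ (GdLE.of_equiv ?_ h)
    · rintro ⟨p, hp⟩
      obtain ⟨y, rfl⟩ := hf p
      exact ⟨⟨y, hp⟩, rfl⟩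
    · exact
      { toFun := fun y => ⟨⟨y.1, by
          have : f y.1 = 0 := y.2
          simp [this]⟩, by
          have : f y.1 = 0 := y.2
          exact Subtype.ext this⟩
        invFun := fun y => ⟨y.1.1, congrArg Subtype.val y.2⟩
        map_add' := fun y z => rfl
        map_smul' := fun r y => rfl
        left_inv := fun y => rfl
        right_inv := fun y => rfl }

/-- Any first syzygy of a module of G-dimension at most `n + 1` has G-dimension at most `n`: a
lift `l : F → G` of the free cover identifies the syzygy with the kernel of a surjection
`ker f × F → G`. -/
theorem GdLE.syzygy [IsNoetherianRing R] {n : ℕ} {M F : Type u} [AddCommGroup M] [Module R M]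
    [AddCommGroup F] [Module R F] [Module.Free R F] [Module.Finite R F]
    (h : GdLE R (n + 1) M) (π : F →ₗ[R] M) (hπ : Function.Surjective π) :
    GdLE R n (LinearMap.ker π) := by
  obtain ⟨G, hG, hG', f, hf, h⟩ := h
  obtain ⟨l, hl⟩ := Module.projective_lifting_property f π hf
  have hl' : ∀ y, f (l y) = π y := fun y => LinearMap.congr_fun hl y
  let q : LinearMap.ker f × F →ₗ[R] G := (LinearMap.ker f).subtype.coprod l
  have hq : Function.Surjective q := by
    intro g
    obtain ⟨y, hy⟩ := hπ (f g)
    refine ⟨(⟨g - l y, by simp [hl', hy]⟩, y), ?_⟩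
    simp [q]
  refine GdLE.of_equiv ?_ ((GdLE.prod F h).ker_of_reflexive hG' q hq)
  exact
    { toFun := fun y => ⟨y.1.2, by
        have h1 : (y.1.1 : G) + l y.1.2 = 0 := y.2
        have h2 : f y.1.1 = 0 := y.1.1.2
        have := congrArg f h1
        simpa [h2, hl'] using this⟩
      invFun := fun y => ⟨(⟨-l y.1, by simp [hl']⟩, y.1), by simp [q]⟩
      map_add' := fun y z => rfl
      map_smul' := fun r y => rfl
      left_inv := fun y => by
        have h1 : (y.1.1 : G) + l y.1.2 = 0 := y.2
        ext
        · simp [eq_neg_of_add_eq_zero_left h1]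
        · rfl
      right_inv := fun y => rfl }

theorem GdLE.extVanishes {n : ℕ} {M : Type u} [AddCommGroup M] [Module R M] (h : GdLE R n M) :
    ∀ i > n, ExtVanishes R M R i := by
  induction n generalizing M with
  | zero => exact h.2.1
  | succ n ih =>
    obtain ⟨G, hG, hG', f, hf, h⟩ := h
    rintro (_ | i) hi
    · omega
    · exact (ih h i (by omega)).right (IsSES.ker hf) (hG'.2.1 _ (by omega))

/-- A module of finite G-dimension with `Ext^i(M, R) = 0` for all `i > 0` is totally reflexive. -/
theorem GdLE.reflexive {n : ℕ} {M : Type u} [AddCommGroup M] [Module R M] (h : GdLE R n M)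
    (hM : ∀ i > 0, ExtVanishes R M R i) : IsTotallyReflexive R M := by
  induction n generalizing M with
  | zero => exact h
  | succ n ih =>
    obtain ⟨G, hG, hG', f, hf, h⟩ := h
    refine IsTotallyReflexive.right (IsSES.ker hf) (ih h fun i hi => ?_) hG' hM
    exact (hG'.2.1 i hi).left (IsSES.ker hf) (hM (i + 1) (by omega))

/-- Vanishing of `Ext^i(M, R)` for `i > m` bounds a finite G-dimension by `m`. -/
theorem GdLE.of_extVanishes [IsNoetherianRing R] {n m : ℕ} {M : Type u} [AddCommGroup M]
    [Module R M] [Module.Finite R M] (h : GdLE R n M) (hM : ∀ i > m, ExtVanishes R M R i) :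
    GdLE R m M := by
  induction m generalizing M n with
  | zero => exact h.reflexive hM
  | succ m ih =>
    obtain ⟨G, hG, hG', f, hf, h⟩ := h.mono_succ
    refine GdLE.succ hG' f hf (ih h ?_)
    intro i hi
    exact (hG'.2.1 i (by omega)).left (IsSES.ker hf) (hM (i + 1) (by omega))

/-! ### G-dimension and the mapping cone of multiplication by `x` -/

section cone

variable {M F : Type u} [AddCommGroup M] [Module R M] [AddCommGroup F] [Module R F]

/-- The map `F × M → M`, `(f, m) ↦ π f + x m`. When `π` is a free cover, its kernel is a first
syzygy of the mapping cone of `x` on `M`; when moreover `x` is `M`-regular, it is a first syzygy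
of `M / xM`. -/
abbrev coneMap (x : R) (π : F →ₗ[R] M) : F × M →ₗ[R] M := π.coprod (x • LinearMap.id)

theorem coneMap_surjective (x : R) {π : F →ₗ[R] M} (hπ : Function.Surjective π) :
    Function.Surjective (coneMap x π) := fun m => by
  obtain ⟨y, rfl⟩ := hπ m
  exact ⟨(y, 0), by simp⟩

variable {F₁ : Type u} [AddCommGroup F₁] [Module R F₁]

/-- The free cover `(f', f) ↦ (π' f' + x f, -π f)` of `ker (coneMap x π)`, for `π'` a free
cover of `ker π`. -/
def coneCover (x : R) (π : F →ₗ[R] M) (π' : F₁ →ₗ[R] LinearMap.ker π) :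
    F₁ × F →ₗ[R] LinearMap.ker (coneMap x π) :=
  LinearMap.codRestrict _
    ((((LinearMap.ker π).subtype ∘ₗ π').coprod (x • LinearMap.id)).prod
      (-(π ∘ₗ LinearMap.snd R F₁ F))) (by intro y; simp)

theorem coneCover_surjective (x : R) {π : F →ₗ[R] M} (hπ : Function.Surjective π)
    {π' : F₁ →ₗ[R] LinearMap.ker π} (hπ' : Function.Surjective π') :
    Function.Surjective (coneCover x π π') := by
  rintro ⟨⟨y, m⟩, hy⟩
  have hy' : π y + x • m = 0 := by simpa using hy
  obtain ⟨z, hz⟩ := hπ (-m)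
  obtain ⟨w, hw⟩ := hπ' ⟨y - x • z, by simp [hz, hy']⟩
  refine ⟨(w, z), ?_⟩
  ext
  · simp [coneCover, hw]
  · simp [coneCover, hz]

/-- The kernel of the free cover `coneCover` is the kernel of `coneMap` for the first syzygy. -/
def coneCoverKer (x : R) (π : F →ₗ[R] M) (π' : F₁ →ₗ[R] LinearMap.ker π) :
    LinearMap.ker (coneMap x π') ≃ₗ[R] LinearMap.ker (coneCover x π π') where
  toFun y := ⟨(y.1.1, y.1.2), by
    have h : (π' y.1.1 : F) + x • (y.1.2 : F) = 0 := congrArg Subtype.val y.2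
    have h2 : π y.1.2 = 0 := y.1.2.2
    ext <;> simp [coneCover, h, h2]⟩
  invFun y := ⟨(y.1.1, ⟨y.1.2, by
    have := congrArg (fun z => z.1.2) y.2
    simpa [coneCover] using this⟩), by
    have h : (π' y.1.1 : F) + x • y.1.2 = 0 := congrArg (fun z => z.1.1) y.2
    ext
    simpa using h⟩
  map_add' y z := rfl
  map_smul' r y := rfl
  left_inv y := rfl
  right_inv y := rfl

end cone

variable [IsNoetherianRing R]

/-- A bound on the G-dimension of `M` bounds that of the first syzygy of the cone of `x`. -/
theorem GdLE.cone {n : ℕ} {M F : Type u} [AddCommGroup M] [Module R M] [AddCommGroup F]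
    [Module R F] [Module.Finite R M] [Module.Free R F] [Module.Finite R F] (x : R)
    {π : F →ₗ[R] M} (hπ : Function.Surjective π) (h : GdLE R n M) :
    GdLE R n (LinearMap.ker (coneMap x π)) := by
  induction n generalizing M F with
  | zero =>
    refine IsTotallyReflexive.left (IsSES.ker (coneMap_surjective x hπ)) ?_ h
    exact IsTotallyReflexive.mid (IsSES.prod F M) (.of_free F) h
  | succ n ih =>
    obtain ⟨F₁, _, _, _, _, π', hπ'⟩ := Module.exists_finite_presentation R (LinearMap.ker π)
    refine GdLE.succ (.of_free (F₁ × F)) (coneCover x π π') (coneCover_surjective x hπ hπ') ?_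
    exact GdLE.of_equiv (coneCoverKer x π π') (ih hπ' (h.syzygy π hπ))

/-- Conversely, if `Ext^i(M, R) = 0` for `i > n`, a bound `n` on the G-dimension of the first
syzygy of the cone of `x` is a bound for `M`. -/
theorem GdLE.of_cone [IsLocalRing R] {n : ℕ} {M F : Type u} [AddCommGroup M] [Module R M]
    [AddCommGroup F] [Module R F] [Module.Finite R M] [Module.Free R F] [Module.Finite R F] {x : R}
    (hx : x ∈ maximalIdeal R) {π : F →ₗ[R] M} (hπ : Function.Surjective π)
    (hM : ∀ i > n, ExtVanishes R M R i) (h : GdLE R n (LinearMap.ker (coneMap x π))) :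
    GdLE R n M := by
  induction n generalizing M F with
  | zero => exact IsTotallyReflexive.descend hx (IsSES.ker (coneMap_surjective x hπ)) h hM
  | succ n ih =>
    obtain ⟨F₁, _, _, _, _, π', hπ'⟩ := Module.exists_finite_presentation R (LinearMap.ker π)
    refine GdLE.succ (.of_free F) π hπ (ih hπ' ?_ ?_)
    · rintro i hi
      exact ((IsTotallyReflexive.of_free F).2.1 i (by omega)).left (IsSES.ker hπ)
        (hM (i + 1) (by omega))
    · exact GdLE.of_equiv (coneCoverKer x π π').symm
        (h.syzygy (coneCover x π π') (coneCover_surjective x hπ hπ'))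

end gdim

/-! ### The quotient by a regular element -/

section quotient

variable [IsLocalRing R] [IsNoetherianRing R]
    {M : Type u} [AddCommGroup M] [Module R M] {x : R}

/-- The quotient `M / xM`. -/
abbrev ModQuot (x : R) (M : Type u) [AddCommGroup M] [Module R M] : Type u :=
  M ⧸ ((Ideal.span {x} : Ideal R) • (⊤ : Submodule R M))

omit [IsLocalRing R] [IsNoetherianRing R] in
theorem mem_span_smul_top {m : M} :
    m ∈ (Ideal.span {x} : Ideal R) • (⊤ : Submodule R M) ↔ ∃ m', x • m' = m := by
  rw [Submodule.ideal_span_singleton_smul, Submodule.mem_smul_pointwise_iff_exists]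
  simp

omit [IsLocalRing R] [IsNoetherianRing R] in
theorem IsSES.quotient (hreg : IsSMulRegular M x) :
    IsSES (x • LinearMap.id : M →ₗ[R] M) (Submodule.mkQ _ : M →ₗ[R] (ModQuot x M)) where
  inj := hreg
  exact m := by
    rw [Submodule.mkQ_apply, Submodule.Quotient.mk_eq_zero, mem_span_smul_top]
    rfl
  surj := Submodule.mkQ_surjective _

/-- Nakayama: `Ext^n(M, N)` vanishes as soon as `Ext^{n+1}(M/xM, N)` does. -/
theorem ExtVanishes.of_quotient [Module.Finite R M] (hx : x ∈ maximalIdeal R)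
    (hreg : IsSMulRegular M x) {N : Type u} [AddCommGroup N] [Module R N] [Module.Finite R N]
    {n : ℕ} (h : ExtVanishes R (ModQuot x M) N (n + 1)) : ExtVanishes R M N n := by
  have h0 : ExtVanishes R PUnit.{u + 1} N n := by
    cases n with
    | zero =>
      rw [extVanishes_zero_iff]
      intro φ
      refine LinearMap.ext fun y => ?_
      rw [Subsingleton.elim y 0, map_zero, map_zero]
    | succ n => exact .of_projective n
  exact ExtVanishes.nakayama (F := PUnit.{u + 1}) (IsSES.quotient hreg) hx 0 0 LinearMap.id
    (by simp) h0 h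

omit [IsLocalRing R] [IsNoetherianRing R] in
theorem ExtVanishes.quotient_zero {N : Type u} [AddCommGroup N] [Module R N]
    (h : ExtVanishes R M N 0) : ExtVanishes R (ModQuot x M) N 0 := by
  rw [extVanishes_zero_iff] at *
  intro φ
  refine Submodule.linearMap_qext _ ?_
  rw [h (φ ∘ₗ Submodule.mkQ _), LinearMap.zero_comp]

omit [IsLocalRing R] [IsNoetherianRing R] in
theorem ExtVanishes.quotient_succ (hreg : IsSMulRegular M x) {N : Type u} [AddCommGroup N]
    [Module R N] {n : ℕ} (h : ExtVanishes R M N n) (h' : ExtVanishes R M N (n + 1)) :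
    ExtVanishes R (ModQuot x M) N (n + 1) := h.right (IsSES.quotient hreg) h'

theorem memPerp_quotient_iff [Module.Finite R M] (hx : x ∈ maximalIdeal R)
    (hreg : IsSMulRegular M x) {N : Type u} [AddCommGroup N] [Module R N] [Module.Finite R N] :
    MemPerp R (ModQuot x M) N ↔ MemPerp R M N := by
  constructor
  · rintro ⟨d, hd⟩
    exact ⟨d, fun n hn => .of_quotient hx hreg (hd (n + 1) (by omega))⟩
  · rintro ⟨d, hd⟩
    refine ⟨d + 1, ?_⟩
    rintro (_ | n) hn
    · omega
    · exact .quotient_succ hreg (hd n (by omega)) (hd (n + 1) (by omega))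

omit [IsLocalRing R] [IsNoetherianRing R] in
/-- `⊥ + 1 = ⊥` in `WithBot ℕ∞`, so this also covers the empty set. -/
theorem sSup_add_one_le {S : Set (WithBot ℕ∞)} {T : WithBot ℕ∞} (h : ∀ s ∈ S, s + 1 ≤ T) :
    sSup S + 1 ≤ T := by
  induction T using WithBot.recBotCoe with
  | bot =>
    have hS : sSup S ≤ ⊥ := sSup_le fun s hs => by
      have := h s hs
      induction s using WithBot.recBotCoe with
      | bot => exact le_rfl
      | coe s => exact absurd this (by rw [le_bot_iff]; exact WithBot.coe_ne_bot)
    rw [le_bot_iff.1 hS]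
    exact le_rfl
  | coe T =>
    induction T using ENat.recTopCoe with
    | top => exact le_top
    | coe T =>
      cases T with
      | zero =>
        have hS : sSup S ≤ ⊥ := sSup_le fun s hs => by
          have := h s hs
          simpa using this
        rw [le_bot_iff.1 hS]
        exact bot_le
      | succ T =>
        have hS : sSup S ≤ ((T : ℕ∞) : WithBot ℕ∞) := sSup_le fun s hs => by
          have := h s hs
          induction s using WithBot.recBotCoe with
          | bot => exact bot_le
          | coe s =>
            have h1 : s + 1 ≤ (T : ℕ∞) + 1 := WithBot.coe_le_coe.1 (by exact_mod_cast this)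
            exact WithBot.coe_le_coe.2 ((ENat.add_le_add_iff_right ENat.one_ne_top).1 h1)
        push_cast
        gcongr
        exact hS

/-- `P(M/xM, N) = P(M, N) + 1`; when every `Ext^n(M, N)` vanishes both sides are `⊥`. -/
theorem extP_quotient [Module.Finite R M] (hx : x ∈ maximalIdeal R)
    (hreg : IsSMulRegular M x) {N : Type u} [AddCommGroup N] [Module R N] [Module.Finite R N] :
    extP R (ModQuot x M) N = extP R M N + 1 := by
  apply le_antisymm
  · refine sSup_le ?_
    rintro _ ⟨n, hn, rfl⟩
    have le : ∀ k : ℕ, ¬ ExtVanishes R M N k → ((k : ℕ∞) : WithBot ℕ∞) ≤ extP R M N :=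
      fun k hk => le_sSup ⟨k, hk, rfl⟩
    cases n with
    | zero =>
      refine (le 0 fun h => hn h.quotient_zero).trans ?_
      exact le_add_of_nonneg_right zero_le_one
    | succ n =>
      by_cases h : ExtVanishes R M N n
      · refine (le (n + 1) fun h' => hn (.quotient_succ hreg h h')).trans ?_
        exact le_add_of_nonneg_right zero_le_one
      · push_cast
        gcongr
        exact le n h
  · refine sSup_add_one_le ?_
    rintro _ ⟨n, hn, rfl⟩
    exact le_sSup ⟨n + 1, fun h => hn (.of_quotient hx hreg h), by push_cast; rfl⟩

theorem extPsup_quotient [Module.Finite R M] (hx : x ∈ maximalIdeal R)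
    (hreg : IsSMulRegular M x) : extPsup R (ModQuot x M) = extPsup R M + 1 := by
  apply le_antisymm
  · refine sSup_le ?_
    rintro _ ⟨N, _, _, _, hN, rfl⟩
    rw [extP_quotient hx hreg]
    gcongr
    exact le_sSup ⟨N, _, _, ‹_›, (memPerp_quotient_iff hx hreg).1 hN, rfl⟩
  · refine sSup_add_one_le ?_
    rintro _ ⟨N, _, _, _, hN, rfl⟩
    exact le_sSup ⟨N, _, _, ‹_›, (memPerp_quotient_iff hx hreg).2 hN,
      (extP_quotient hx hreg).symm⟩

/-- Finiteness of the G-dimension passes from `M` to `M/xM` and back. -/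
theorem exists_gdLE_quotient_iff [Module.Finite R M] (hx : x ∈ maximalIdeal R)
    (hreg : IsSMulRegular M x) : (∃ n, GdLE R n (ModQuot x M)) ↔ ∃ n, GdLE R n M := by
  obtain ⟨F, _, _, _, _, π, hπ⟩ := Module.exists_finite_presentation R M
  let q : F →ₗ[R] (ModQuot x M) := Submodule.mkQ _ ∘ₗ π
  have hq : Function.Surjective q := (Submodule.mkQ_surjective _).comp hπ
  have hqker : ∀ y, q y = 0 ↔ ∃ m, x • m = π y := fun y => by
    rw [LinearMap.comp_apply, Submodule.mkQ_apply, Submodule.Quotient.mk_eq_zero,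
      mem_span_smul_top]
  -- Regularity of `x` makes the second component of `(f, m)` in `ker (coneMap x π)` redundant.
  let p : LinearMap.ker (coneMap x π) →ₗ[R] LinearMap.ker q :=
    (LinearMap.fst R F M).restrict fun y hy => (hqker _).2 ⟨-y.2, by
      have : π y.1 + x • y.2 = 0 := hy
      rw [smul_neg]
      exact (eq_neg_of_add_eq_zero_left this).symm⟩
  have hp : Function.Bijective p := by
    constructor
    · rw [injective_iff_map_eq_zero]
      rintro ⟨⟨y, m⟩, hy⟩ h
      have h1 : y = 0 := congrArg Subtype.val h
      subst h1
      have h2 : π 0 + x • m = 0 := hy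
      have h3 : m = 0 := hreg (by simpa using h2)
      subst h3
      rfl
    · rintro ⟨y, hy⟩
      obtain ⟨m, hm⟩ := (hqker y).1 hy
      exact ⟨⟨(y, -m), by simp [hm]⟩, rfl⟩
  let e := LinearEquiv.ofBijective p hp
  constructor
  · rintro ⟨n, h⟩
    refine ⟨n, GdLE.of_cone hx hπ ?_ (GdLE.of_equiv e.symm (h.mono_succ.syzygy q hq))⟩
    exact fun i hi => .of_quotient hx hreg (h.extVanishes (i + 1) (by omega))
  · rintro ⟨n, h⟩
    exact ⟨n + 1, GdLE.succ (.of_free F) q hq (GdLE.of_equiv e (h.cone x hπ))⟩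

omit [IsLocalRing R] [IsNoetherianRing R] in
theorem gdim_eq_top (h : ¬ ∃ n, GdLE R n M) : gdim R M = ⊤ := by
  refine sInf_eq_top.2 ?_
  rintro _ ⟨n, hn, -⟩
  exact (h ⟨n, hn⟩).elim

omit [IsLocalRing R] in
/-- For a nonzero module of finite G-dimension, `G-dim M ≤ P(M, R) ≤ P(M)`. -/
theorem gdim_le_extPsup [Module.Finite R M] [Nontrivial M] (h : ∃ n, GdLE R n M) :
    ((gdim R M : ℕ∞) : WithBot ℕ∞) ≤ extPsup R M := by
  obtain ⟨n, h⟩ := h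
  refine le_trans ?_ (le_sSup ⟨R, _, _, inferInstance, ⟨n + 1, fun i hi =>
    h.extVanishes i (by omega)⟩, rfl⟩ : extP R M R ≤ extPsup R M)
  have hle : ∀ m, (∀ i > m, ExtVanishes R M R i) → gdim R M ≤ m := fun m hm =>
    sInf_le ⟨m, h.of_extVanishes hm, rfl⟩
  have hne : ∃ i, ¬ ExtVanishes R M R i := by
    by_contra! hall
    have hM := h.reflexive fun i _ => hall i
    obtain ⟨m, hm⟩ := exists_ne (0 : M)
    refine hm (hM.1.1 ?_)
    ext φ
    rw [extVanishes_zero_iff.1 (hall 0) φ]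
    simp
  obtain ⟨m, hm, hmax⟩ : ∃ m, ¬ ExtVanishes R M R m ∧ ∀ i > m, ExtVanishes R M R i := by
    classical
    have hb : ∀ i, ¬ ExtVanishes R M R i → i ≤ n := fun i hi => by
      by_contra! hlt
      exact hi (h.extVanishes i hlt)
    obtain ⟨i, hi⟩ := hne
    refine ⟨Nat.findGreatest (fun i => ¬ ExtVanishes R M R i) n,
      Nat.findGreatest_spec (P := fun i => ¬ ExtVanishes R M R i) (hb i hi) hi, fun j hj => ?_⟩
    by_contra hj'
    exact absurd (Nat.le_findGreatest (P := fun i => ¬ ExtVanishes R M R i) (hb j hj') hj')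
      (by omega)
  exact (WithBot.coe_le_coe.2 (hle m hmax)).trans (le_sSup ⟨m, hm, rfl⟩)

end quotient
end

/-- Proposition 2.6(2): `AB-dim_R (M/xM) = AB-dim_R M + 1` for any `M`-regular element
`x ∈ 𝔪`. -/
theorem statement7 (R : Type u) [CommRing R] [IsLocalRing R] [IsNoetherianRing R]
    (M : Type u) [AddCommGroup M] [Module R M] [Module.Finite R M] [Nontrivial M]
    (x : R) (hx : x ∈ maximalIdeal R) (hreg : IsSMulRegular M x) :
    abdim R (M ⧸ ((Ideal.span {x} : Ideal R) • (⊤ : Submodule R M))) = abdim R M + 1 := by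
  have hiff := exists_gdLE_quotient_iff (M := M) hx hreg
  unfold abdim
  by_cases hM : ∃ n, GdLE R n M
  · have : Nontrivial (M ⧸ ((Ideal.span {x} : Ideal R) • (⊤ : Submodule R M))) := by
      rw [Submodule.ideal_span_singleton_smul]
      exact nontrivial_quotSMulTop_of_mem_maximalIdeal M hx
    rw [max_eq_right (gdim_le_extPsup hM), max_eq_right (gdim_le_extPsup (hiff.2 hM)),
      extPsup_quotient hx hreg]
  · rw [gdim_eq_top hM, gdim_eq_top (mt hiff.1 hM)]
    have : ((⊤ : ℕ∞) : WithBot ℕ∞) = ⊤ := rfl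
    simp only [this, le_top, sup_of_le_left]
    rfl
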